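/- Let H be a finite connected multigraph with at least one edge which is two-edge connected (it has no cut edge), whose edges are colored by {1,…,L}. Let GCC(H) = (𝓥,𝓔) be its graph of colored components. If GCC(H) is not a tree, then |𝓥| − |𝓔| − 1 + Σ_{S∈CC(H)} 𝔣(S)/2 − |CC(H)| ≤ −1. -/

import Mathlib

open MeasureTheory ProbabilityTheory Filter Matrix Asymptotics
open scoped BigOperators ENNReal
open scoped Classical

noncomputable section

/-- The diagonal projection `Δ` on `N × N` complex matrices. -/
def dproj {N : ℕ} (A : Matrix (Fin N) (Fin N) ℂ) : Matrix (Fin N) (Fin N) ℂ :=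
  Matrix.of fun i j => if i = j then A i j else 0

/-- The operator norm of a matrix acting on `ℓ²({1,…,N})`. -/
def matOpNorm {N : ℕ} (A : Matrix (Fin N) (Fin N) ℂ) : ℝ :=
  ‖Matrix.toEuclideanCLM (𝕜 := ℂ) A‖

/-! ### Multigraph combinatorics -/

section Graph

variable {V E : Type} (src tgt : E → V)

/-- Adjacency through an edge avoiding a forbidden set `F` of edges
(direction is ignored). -/
def adjOn (F : Set E) (a b : V) : Prop :=
  ∃ e, e ∉ F ∧ ((src e = a ∧ tgt e = b) ∨ (src e = b ∧ tgt e = a))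

/-- Reachability in the graph, using only edges outside `F`. -/
def reachOn (F : Set E) : V → V → Prop :=
  Relation.ReflTransGen (adjOn src tgt F)

lemma adjOn_symm (F : Set E) : Symmetric (adjOn src tgt F) := by
  rintro a b ⟨e, he, h⟩
  exact ⟨e, he, h.symm⟩

/-- The setoid of connectivity using edges outside `F`. -/
def connSetoid (F : Set E) : Setoid V :=
  ⟨reachOn src tgt F,
    ⟨fun _ => Relation.ReflTransGen.refl,
     fun h => (@Relation.ReflTransGen.symmetric _ _ ⟨fun _ _ h' => adjOn_symm src tgt F h'⟩).symm _ _ h,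
     fun h h' => Relation.ReflTransGen.trans h h'⟩⟩

/-- Number of connected components of the graph with the edges in `F` deleted. -/
def ncompAvoiding (F : Set E) : ℕ :=
  Nat.card (Quotient (connSetoid src tgt F))

/-- Number of connected components. -/
def ncomp : ℕ := ncompAvoiding src tgt ∅

/-- The graph is connected. -/
def IsConnectedGraph : Prop := ∀ a b : V, reachOn src tgt ∅ a b

/-- A cut edge (bridge): deleting it disconnects its endpoints. -/
def IsCutEdge (e : E) : Prop := ¬ reachOn src tgt {e} (src e) (tgt e)

/-- The set of cut edges. -/
def cutEdges : Set E := {e | IsCutEdge src tgt e}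

/-- The setoid whose classes are the two-edge connected components
(connected components after deleting all cut edges). -/
def teccSetoid : Setoid V := connSetoid src tgt (cutEdges src tgt)

/-- Degree, in the forest of two-edge connected components, of a
two-edge connected component: the number of cut edges incident to it. -/
def teccDeg (c : Quotient (teccSetoid src tgt)) : ℕ :=
  Nat.card {e : E // IsCutEdge src tgt e ∧
    (Quotient.mk (teccSetoid src tgt) (src e) = c ∨
      Quotient.mk (teccSetoid src tgt) (tgt e) = c)}

/-- `𝔣(G)`: the number of leaves of the forest of two-edge connected components,
single-vertex trees of the forest counting twice. -/
def frak : ℕ :=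
  Nat.card {c : Quotient (teccSetoid src tgt) // teccDeg src tgt c = 1} +
    2 * Nat.card {c : Quotient (teccSetoid src tgt) // teccDeg src tgt c = 0}

end Graph

/-! ### Graph monomials -/

/-- A graph monomial: a finite directed multigraph with two roots and edges
labelled by a family index in `Fin L` and an index in `K`.  (Connectedness is
required separately via `IsConnectedGraph`.) -/
structure GraphMonomial (L : ℕ) (K : Type) where
  V : Type
  E : Type
  fintV : Fintype V
  fintE : Fintype E
  src : E → V
  tgt : E → V
  vin : V
  vout : V
  labL : E → Fin L
  labK : E → K

attribute [instance] GraphMonomial.fintV GraphMonomial.fintE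

namespace GraphMonomial

variable {L : ℕ} {K : Type} (g : GraphMonomial L K)

/-- Evaluation of a graph monomial in a collection of matrices. -/
def eval {N : ℕ} (A : Fin L → K → Matrix (Fin N) (Fin N) ℂ) :
    Matrix (Fin N) (Fin N) ℂ :=
  Matrix.of fun i j => ∑ φ : g.V → Fin N,
    if φ g.vin = j ∧ φ g.vout = i then
      ∏ e : g.E, A (g.labL e) (g.labK e) (φ (g.tgt e)) (φ (g.src e))
    else 0

/-- The starting vertex of a step `(e, b)`: `e` traversed forward if `b = true`,
backward otherwise. -/
def stepSrc (s : g.E × Bool) : g.V := if s.2 then g.src s.1 else g.tgt s.1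

/-- The ending vertex of a step. -/
def stepTgt (s : g.E × Bool) : g.V := if s.2 then g.tgt s.1 else g.src s.1

/-- A simple cycle of the underlying undirected multigraph: a nonempty cyclic
sequence of steps with pairwise distinct edges and pairwise distinct vertices. -/
def IsSimpleCycle (c : List (g.E × Bool)) : Prop :=
  ∃ h : c ≠ [],
    (∀ i : Fin c.length,
      g.stepTgt (c.get i) =
        g.stepSrc (c.get ⟨((i : ℕ) + 1) % c.length,
          Nat.mod_lt _ (List.length_pos_iff.mpr h)⟩)) ∧
    (c.map Prod.fst).Nodup ∧ (c.map g.stepSrc).Nodup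

/-- A cycle is directed when it traverses all its edges consistently with
their orientations (one way or the other). -/
def IsDirectedCycleList (c : List (g.E × Bool)) : Prop :=
  (∀ s ∈ c, s.2 = true) ∨ (∀ s ∈ c, s.2 = false)

/-- `S` is the edge set of some simple cycle. -/
def IsCycleEdgeSet (S : Finset g.E) : Prop :=
  ∃ c, g.IsSimpleCycle c ∧ (c.map Prod.fst).toFinset = S

/-- The underlying graph is an oriented cactus: it is connected, every simple
cycle is directed, and every edge belongs to exactly one simple cycle. -/
def IsOrientedCactus : Prop :=
  IsConnectedGraph g.src g.tgt ∧
  (∀ c, g.IsSimpleCycle c → g.IsDirectedCycleList c) ∧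
  (∀ e : g.E, ∃! S : Finset g.E, g.IsCycleEdgeSet S ∧ e ∈ S)

/-- A cactus-type monomial: an oriented cactus whose input and output coincide. -/
def IsCactusType : Prop := g.vin = g.vout ∧ g.IsOrientedCactus

/-- A member of `ℱ`: a directed simple path (oriented from the input, at the far
right, to the output, at the far left) with oriented cacti attached to the
vertices of the path (the root of each cactus being a path vertex). -/
def IsPathCactusType : Prop :=
  IsConnectedGraph g.src g.tgt ∧
  ∃ (d : ℕ) (v : Fin (d + 1) → g.V) (f : Fin d → g.E),
    Function.Injective v ∧ Function.Injective f ∧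
    (∀ j : Fin d, g.src (f j) = v j.succ ∧ g.tgt (f j) = v j.castSucc) ∧
    g.vin = v (Fin.last d) ∧ g.vout = v 0 ∧
    (∀ c, g.IsSimpleCycle c → g.IsDirectedCycleList c ∧ ∀ s ∈ c, s.1 ∉ Set.range f) ∧
    (∀ e : g.E, e ∉ Set.range f →
      ∃! S : Finset g.E, g.IsCycleEdgeSet S ∧ e ∈ S) ∧
    (∀ w : g.V, ∃! j : Fin (d + 1), reachOn g.src g.tgt (Set.range f) w (v j))

end GraphMonomial
/-! ### The graph of colored components -/

section GCC

variable {V E : Type} (src tgt : E → V) {L : ℕ} (col : E → Fin L)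

/-- Connectivity using only edges of color `ℓ`. -/
def colorSetoid (ℓ : Fin L) : Setoid V :=
  connSetoid src tgt {e | col e ≠ ℓ}

/-- The colored components: maximal connected subgraphs all of whose edges
have one single color.  Such a component is encoded by its color together
with the corresponding class of vertices (which is required to contain at
least one edge of that color). -/
def ColoredComp : Type :=
  {p : Σ ℓ : Fin L, Quotient (colorSetoid src tgt col ℓ) //
    ∃ e, col e = p.1 ∧ Quotient.mk (colorSetoid src tgt col p.1) (src e) = p.2}

/-- Membership of a vertex in a colored component. -/
def memCC (v : V) (S : ColoredComp src tgt col) : Prop :=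
  Quotient.mk (colorSetoid src tgt col S.1.1) v = S.1.2

/-- The graph of colored components `GCC`: the undirected bipartite graph on
the colored components and the vertices, a vertex being joined to each colored
component it belongs to. -/
def gccGraph : SimpleGraph (ColoredComp src tgt col ⊕ V) where
  Adj x y :=
    (∃ S v, x = Sum.inl S ∧ y = Sum.inr v ∧ memCC src tgt col v S) ∨
    (∃ S v, x = Sum.inr v ∧ y = Sum.inl S ∧ memCC src tgt col v S)
  symm := by
    constructor
    rintro x y (⟨S, v, hx, hy, hm⟩ | ⟨S, v, hx, hy, hm⟩)
    · exact Or.inr ⟨S, v, hy, hx, hm⟩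
    · exact Or.inl ⟨S, v, hy, hx, hm⟩
  loopless := by
    constructor
    rintro x (⟨S, v, rfl, hy, hm⟩ | ⟨S, v, rfl, hy, hm⟩) <;> simp at hy

end GCC
/-! ### Colored subgraphs of a test graph -/

section ColSub

variable {V E : Type} (src tgt : E → V) {L : ℕ} (labL : E → Fin L)

/-- Source map of the union `T'_ℓ` of the colored components of color `ℓ`. -/
def colSubSrc (ℓ : Fin L) :
    {e : E // labL e = ℓ} → {v : V // ∃ e, labL e = ℓ ∧ (src e = v ∨ tgt e = v)} :=
  fun e => ⟨src e.1, e.1, e.2, Or.inl rfl⟩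

/-- Target map of the union `T'_ℓ` of the colored components of color `ℓ`. -/
def colSubTgt (ℓ : Fin L) :
    {e : E // labL e = ℓ} → {v : V // ∃ e, labL e = ℓ ∧ (src e = v ∨ tgt e = v)} :=
  fun e => ⟨tgt e.1, e.1, e.2, Or.inr rfl⟩

end ColSub

/-!
Let `G` be the graph of colored components. A vertex of `G` never has exactly one incident edge
that lies on a cycle. If `G` is connected and has a cycle, the vertices having no such edge are at
most as many as the bridges of `G`, so the handshake formula for the edges lying on a cycle,
incident to `x` in number `d x`, gives `∑ x, max 2 (d x) ≤ 2 |𝓔|`. Each vertex of `H` contributes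
at least `2` to this sum, and each colored component `S` at least `𝔣(S)`: the forest of `S` is a
tree, so `𝔣(S)` is at most the maximum of `2` and its number of leaves, and every leaf contains a
vertex whose edge to `S` in `G` lies on a cycle, because `H` has no cut edge.
Hence `2 |V| + ∑ S, 𝔣(S) ≤ 2 |𝓔|`, and the estimate follows from `|𝓥| = |V| + |CC(H)|`.
-/

section NonBridge

variable {X : Type*} {G : SimpleGraph X} {x y r : X}

variable (G) in
/-- The spanning subgraph formed by the edges that are not bridges, that is, the edges lying on
a cycle. Its components are the two-edge connected components of `G`. -/
def nonBridgeGraph : SimpleGraph X := G.deleteEdges {e | G.IsBridge e}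

lemma nonBridgeGraph_adj : (nonBridgeGraph G).Adj x y ↔ G.Adj x y ∧ ¬ G.IsBridge s(x, y) :=
  SimpleGraph.deleteEdges_adj

lemma exists_ne_nonBridgeGraph_adj (h : (nonBridgeGraph G).Adj x y) :
    ∃ z ≠ y, (nonBridgeGraph G).Adj x z := by
  obtain ⟨hxy, hb⟩ := nonBridgeGraph_adj.1 h
  rw [SimpleGraph.isBridge_iff_forall_cycle_notMem hxy] at hb
  push Not at hb
  obtain ⟨u, p, hp, he⟩ := hb
  have htwo := hp.ncard_neighborSet_toSubgraph_eq_two (p.fst_mem_support_of_mem_edges he)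
  obtain ⟨z, hz, hzy⟩ := Set.exists_ne_of_one_lt_ncard (htwo ▸ one_lt_two) y
  have hz : p.toSubgraph.Adj x z := hz
  refine ⟨z, hzy, nonBridgeGraph_adj.2 ⟨hz.adj_sub, fun hb => hb.notMem_edges_of_isCycle hp ?_⟩⟩
  rwa [← SimpleGraph.Walk.mem_edges_toSubgraph, SimpleGraph.Subgraph.mem_edgeSet]

lemma nonBridgeGraph_degree_ne_one [Fintype ((nonBridgeGraph G).neighborSet x)] :
    (nonBridgeGraph G).degree x ≠ 1 := by
  rw [Ne, SimpleGraph.degree_eq_one_iff_existsUnique_adj]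
  rintro ⟨y, hy, huniq⟩
  obtain ⟨z, hzy, hz⟩ := exists_ne_nonBridgeGraph_adj hy
  exact hzy (huniq z hz)

lemma exists_adj_dist_eq_dist_add_one (hG : G.Connected) (hx : x ≠ r) :
    ∃ y, G.Adj x y ∧ G.dist x r = G.dist y r + 1 := by
  obtain ⟨p, hp⟩ := hG.exists_walk_length_eq_dist x r
  cases p with
  | nil => exact absurd rfl hx
  | @cons _ y _ hxy q =>
    rw [SimpleGraph.Walk.length_cons] at hp
    have hq := SimpleGraph.dist_le q
    have htri := hG.dist_triangle (u := x) (v := y) (w := r)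
    rw [SimpleGraph.dist_eq_one_iff_adj.2 hxy] at htri
    exact ⟨y, hxy, by omega⟩

/-- Root the graph at a vertex lying on a cycle; every vertex lying on no cycle is then sent to
the bridge through which it leaves towards the root. -/
lemma card_nonBridgeGraph_degree_eq_zero_le [Fintype X] (hG : G.Connected)
    (hcyc : ¬ G.IsAcyclic) :
    ({x | (nonBridgeGraph G).degree x = 0} : Finset X).card ≤
      (G.edgeSet ∩ {e | G.IsBridge e}).ncard := by
  simp only [SimpleGraph.isAcyclic_iff_forall_adj_isBridge, not_forall] at hcyc
  obtain ⟨r, _, hrs, hb⟩ := hcyc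
  have hne : ∀ x, (nonBridgeGraph G).degree x = 0 → x ≠ r := by
    rintro x hx rfl
    refine ((SimpleGraph.degree_pos_iff_exists_adj _ _).2 ?_).ne' hx
    exact ⟨_, nonBridgeGraph_adj.2 ⟨hrs, hb⟩⟩
  choose! parent hadj hdist using
    fun x (hx : x ≠ r) => exists_adj_dist_eq_dist_add_one hG hx
  rw [← Set.ncard_coe_finset]
  refine Set.ncard_le_ncard_of_injOn (fun x => s(x, parent x)) (fun x hx => ?_) ?_
  · have hx : (nonBridgeGraph G).degree x = 0 := by simpa using hx
    have hxp := hadj x (hne x hx)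
    refine ⟨hxp, by_contra fun hb => ?_⟩
    refine ((SimpleGraph.degree_pos_iff_exists_adj _ _).2 ?_).ne' hx
    exact ⟨_, nonBridgeGraph_adj.2 ⟨hxp, hb⟩⟩
  · intro x hx y hy hxy
    have hdx := hdist x (hne x (by simpa using hx))
    have hdy := hdist y (hne y (by simpa using hy))
    rcases Sym2.eq_iff.1 hxy with ⟨h, -⟩ | ⟨hx', hy'⟩
    · exact h
    · rw [hy'] at hdx
      rw [← hx'] at hdy
      omega

theorem sum_max_two_nonBridgeGraph_degree_le [Fintype X] (hG : G.Connected)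
    (hcyc : ¬ G.IsAcyclic) :
    ∑ x, max 2 ((nonBridgeGraph G).degree x) ≤ 2 * Nat.card G.edgeSet := by
  have hmax : ∀ x, max 2 ((nonBridgeGraph G).degree x) = (nonBridgeGraph G).degree x +
      if (nonBridgeGraph G).degree x = 0 then 2 else 0 := by
    intro x
    have := nonBridgeGraph_degree_ne_one (G := G) (x := x)
    split_ifs <;> omega
  have hdeg : ∑ x, (nonBridgeGraph G).degree x = 2 * (G.edgeSet \ {e | G.IsBridge e}).ncard := by
    rw [SimpleGraph.sum_degrees_eq_twice_card_edges, ← SimpleGraph.edgeSet_deleteEdges,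
      ← Set.ncard_coe_finset, SimpleGraph.coe_edgeFinset, nonBridgeGraph]
  have hedge := Set.ncard_inter_add_ncard_sdiff_eq_ncard G.edgeSet {e | G.IsBridge e}
  have hisolated := card_nonBridgeGraph_degree_eq_zero_le hG hcyc
  simp only [hmax]
  rw [Finset.sum_add_distrib, hdeg, ← Finset.sum_filter, Finset.sum_const, smul_eq_mul,
    Nat.card_coe_set_eq]
  omega

end NonBridge

section Tecc

variable {V E : Type} {src tgt : E → V} {F : Set E} {x y : V}

lemma adjOn_of_notMem {e : E} (he : e ∉ F) : adjOn src tgt F (src e) (tgt e) :=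
  ⟨e, he, Or.inl ⟨rfl, rfl⟩⟩

lemma reachOn.symm (h : reachOn src tgt F x y) : reachOn src tgt F y x :=
  (connSetoid src tgt F).symm h

lemma reachOn.mono {F' : Set E} (hF : F' ⊆ F) (h : reachOn src tgt F x y) :
    reachOn src tgt F' x y :=
  Relation.ReflTransGen.mono (fun _ _ ⟨e, he, hxy⟩ => ⟨e, fun he' => he (hF he'), hxy⟩) _ _ h

lemma reachOn.reachable {X : Type*} {G : SimpleGraph X} {f : V → X}
    (hf : ∀ e ∉ F, G.Reachable (f (src e)) (f (tgt e))) (h : reachOn src tgt F x y) :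
    G.Reachable (f x) (f y) := by
  induction h with
  | refl => exact SimpleGraph.Reachable.refl _
  | tail _ hyz ih =>
    obtain ⟨e, he, ⟨rfl, rfl⟩ | ⟨rfl, rfl⟩⟩ := hyz
    exacts [ih.trans (hf e he), ih.trans (hf e he).symm]

variable (src tgt) in
/-- The two-edge connected component of a vertex. -/
abbrev teccOf (x : V) : Quotient (teccSetoid src tgt) := Quotient.mk _ x

lemma IsCutEdge.teccOf_ne {e : E} (he : IsCutEdge src tgt e) :
    teccOf src tgt (src e) ≠ teccOf src tgt (tgt e) := fun h =>
  he ((Quotient.exact h : reachOn src tgt _ _ _).mono (Set.singleton_subset_iff.2 he))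

lemma finite_cutEdges [Finite V] : (cutEdges src tgt).Finite := by
  -- parallel edges are not cut edges
  refine Set.Finite.of_finite_image (f := fun e => s(src e, tgt e)) (Set.toFinite _) ?_
  intro e he e' _ h
  by_contra hne
  exact he (Relation.ReflTransGen.single ⟨e', Ne.symm hne, Sym2.eq_iff.1 h.symm⟩)

lemma teccOf_eq_of_adjOn {c : Quotient (teccSetoid src tgt)}
    (hF : ∀ e, IsCutEdge src tgt e → teccOf src tgt (src e) = c ∨ teccOf src tgt (tgt e) = c →
      e ∈ F)
    (hxy : adjOn src tgt F x y) (hx : teccOf src tgt x = c) : teccOf src tgt y = c := by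
  obtain ⟨e, he, h⟩ := hxy
  have hinc : teccOf src tgt (src e) = c ∨ teccOf src tgt (tgt e) = c := by
    rcases h with ⟨rfl, rfl⟩ | ⟨rfl, rfl⟩
    exacts [Or.inl hx, Or.inr hx]
  have hxy' : teccOf src tgt x = teccOf src tgt y :=
    Quotient.sound (Relation.ReflTransGen.single ⟨e, fun hcut => he (hF e hcut hinc), h⟩)
  exact hxy'.symm.trans hx

lemma exists_cutEdge_of_teccDeg_eq_one {c : Quotient (teccSetoid src tgt)}
    (hc : teccDeg src tgt c = 1) :
    ∃ e a b, ((src e = a ∧ tgt e = b) ∨ (src e = b ∧ tgt e = a)) ∧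
      teccOf src tgt a = c ∧ teccOf src tgt b ≠ c ∧
      ∀ x y, adjOn src tgt {e} x y → teccOf src tgt x = c → teccOf src tgt y = c := by
  obtain ⟨hsub, ⟨⟨e, hcut, hinc⟩⟩⟩ := Nat.card_eq_one_iff_unique.1 hc
  have hclosed : ∀ x y, adjOn src tgt {e} x y → teccOf src tgt x = c → teccOf src tgt y = c :=
    fun x y => teccOf_eq_of_adjOn fun e' hcut' hinc' =>
      congrArg Subtype.val (hsub.elim ⟨e', hcut', hinc'⟩ ⟨e, hcut, hinc⟩)
  rcases hinc with h | h
  · exact ⟨e, _, _, Or.inl ⟨rfl, rfl⟩, h, fun h' => hcut.teccOf_ne (h.trans h'.symm), hclosed⟩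
  · exact ⟨e, _, _, Or.inr ⟨rfl, rfl⟩, h, fun h' => hcut.teccOf_ne (h'.trans h.symm), hclosed⟩

variable (src tgt) in
/-- The connected component containing a given two-edge connected component. -/
def teccComponent :
    Quotient (teccSetoid src tgt) → Quotient (connSetoid src tgt ∅) :=
  Quotient.map id fun _ _ h => reachOn.mono (Set.empty_subset _) h

lemma eq_of_teccDeg_eq_zero [Finite V] {c c' : Quotient (teccSetoid src tgt)}
    (hc : teccDeg src tgt c = 0) (h : teccComponent src tgt c = teccComponent src tgt c') :
    c' = c := by
  have hfin : Finite {e : E // IsCutEdge src tgt e ∧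
      (teccOf src tgt (src e) = c ∨ teccOf src tgt (tgt e) = c)} :=
    (finite_cutEdges.subset fun _ he => he.1).to_subtype
  have hno := Finite.card_eq_zero_iff.1 hc
  induction c using Quotient.inductionOn with | _ x
  induction c' using Quotient.inductionOn with | _ y
  have hxy : reachOn src tgt ∅ x y := Quotient.exact h
  clear h
  induction hxy with
  | refl => rfl
  | tail _ hyz ih =>
    exact teccOf_eq_of_adjOn (fun e hcut hinc => (hno.false ⟨e, hcut, hinc⟩).elim) hyz ih

variable (src tgt) in
/-- The number of two-edge connected components having degree `n` in the forest and lying in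
the connected component `K`. -/
def numTeccOfDeg (n : ℕ) (K : Quotient (connSetoid src tgt ∅)) : ℕ :=
  Nat.card {c // teccDeg src tgt c = n ∧ teccComponent src tgt c = K}

variable (src tgt) in
/-- The number of leaves `𝔣(K)` of one connected component `K`, an isolated vertex of the forest
counting twice. -/
def frakComponent (K : Quotient (connSetoid src tgt ∅)) : ℕ :=
  numTeccOfDeg src tgt 1 K + 2 * numTeccOfDeg src tgt 0 K

lemma sum_numTeccOfDeg [Fintype V] (n : ℕ) :
    ∑ K, numTeccOfDeg src tgt n K = Nat.card {c // teccDeg src tgt c = n} := by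
  let component (c : {c // teccDeg src tgt c = n}) := teccComponent src tgt c
  rw [← Nat.card_congr (Equiv.sigmaFiberEquiv component), Nat.card_sigma]
  refine Finset.sum_congr rfl fun K _ => Nat.card_congr ?_
  exact (Equiv.subtypeSubtypeEquivSubtypeInter _ fun c => teccComponent src tgt c = K).symm

lemma sum_frakComponent [Fintype V] : ∑ K, frakComponent src tgt K = frak src tgt := by
  simp only [frakComponent, Finset.sum_add_distrib, ← Finset.mul_sum, sum_numTeccOfDeg]
  rfl

lemma frakComponent_le_max [Finite V] (K : Quotient (connSetoid src tgt ∅)) :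
    frakComponent src tgt K ≤ max 2 (numTeccOfDeg src tgt 1 K) := by
  by_cases hiso : ∃ c, teccDeg src tgt c = 0 ∧ teccComponent src tgt c = K
  · obtain ⟨c, hc, rfl⟩ := hiso
    have hleaf : numTeccOfDeg src tgt 1 (teccComponent src tgt c) = 0 := by
      refine Finite.card_eq_zero_iff.2 ⟨fun ⟨c', hc', hK⟩ => ?_⟩
      rw [eq_of_teccDeg_eq_zero hc hK.symm, hc] at hc'
      exact zero_ne_one hc'
    have hone : numTeccOfDeg src tgt 0 (teccComponent src tgt c) ≤ 1 := by
      refine Finite.card_le_one_iff_subsingleton.2 ⟨fun a b => Subtype.ext ?_⟩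
      exact eq_of_teccDeg_eq_zero b.2.1 (b.2.2.trans a.2.2.symm)
    rw [frakComponent]
    omega
  · have hnone : numTeccOfDeg src tgt 0 K = 0 :=
      Finite.card_eq_zero_iff.2 ⟨fun c => hiso ⟨c.1, c.2⟩⟩
    rw [frakComponent]
    omega

end Tecc

section ColoredComponents

variable {V E : Type} {src tgt : E → V} {L : ℕ} {col : E → Fin L} {ℓ : Fin L}

instance [Finite V] : Finite (ColoredComp src tgt col) := by
  unfold ColoredComp
  infer_instance

instance [Finite V] : Fintype (ColoredComp src tgt col) := Fintype.ofFinite _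

variable (src tgt col) in
/-- The vertices of the union of the colored components of color `ℓ`. -/
abbrev ColVert (ℓ : Fin L) : Type := {v : V // ∃ e, col e = ℓ ∧ (src e = v ∨ tgt e = v)}

variable (src tgt col) in
/-- The connected components of the union of the colored components of color `ℓ`. -/
abbrev ColSubComponent (ℓ : Fin L) : Type :=
  Quotient (connSetoid (colSubSrc src tgt col ℓ) (colSubTgt src tgt col ℓ) ∅)

lemma gccGraph_adj_inl_inr {S : ColoredComp src tgt col} {v : V} :
    (gccGraph src tgt col).Adj (Sum.inl S) (Sum.inr v) ↔ memCC src tgt col v S := by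
  simp [gccGraph]

variable (src tgt col) in
/-- The colored component containing an edge. -/
def edgeComp (e : E) : ColoredComp src tgt col :=
  ⟨⟨col e, Quotient.mk _ (src e)⟩, e, rfl, rfl⟩

lemma memCC_edgeComp_src (e : E) : memCC src tgt col (src e) (edgeComp src tgt col e) := rfl

lemma memCC_edgeComp_tgt (e : E) : memCC src tgt col (tgt e) (edgeComp src tgt col e) :=
  Quotient.sound (Relation.ReflTransGen.single ⟨e, not_not.2 rfl, Or.inr ⟨rfl, rfl⟩⟩)

lemma edgeComp_surjective : Function.Surjective (edgeComp src tgt col) := by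
  rintro ⟨⟨ℓ, q⟩, e, he, hq⟩
  dsimp only at he hq
  subst he hq
  exact ⟨e, rfl⟩

lemma exists_adjOn_colSub {F : Set {e : E // col e = ℓ}} {e : {e : E // col e = ℓ}} (he : e ∉ F)
    {x y : V} (hxy : (src e = x ∧ tgt e = y) ∨ (src e = y ∧ tgt e = x)) :
    ∃ w w' : ColVert src tgt col ℓ, w.1 = x ∧ w'.1 = y ∧
      adjOn (colSubSrc src tgt col ℓ) (colSubTgt src tgt col ℓ) F w w' := by
  rcases hxy with ⟨rfl, rfl⟩ | ⟨rfl, rfl⟩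
  · exact ⟨_, _, rfl, rfl, adjOn_of_notMem he⟩
  · exact ⟨_, _, rfl, rfl, adjOn_symm _ _ _ (adjOn_of_notMem he)⟩

lemma reachOn_colSub_iff {w w' : ColVert src tgt col ℓ} :
    reachOn (colSubSrc src tgt col ℓ) (colSubTgt src tgt col ℓ) ∅ w w' ↔
      reachOn src tgt {e | col e ≠ ℓ} w.1 w'.1 := by
  constructor
  · refine Relation.ReflTransGen.lift Subtype.val ?_ w w'
    rintro _ _ ⟨e, -, ⟨rfl, rfl⟩ | ⟨rfl, rfl⟩⟩
    exacts [⟨e.1, not_not.2 e.2, Or.inl ⟨rfl, rfl⟩⟩, ⟨e.1, not_not.2 e.2, Or.inr ⟨rfl, rfl⟩⟩]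
  · obtain ⟨x, hx⟩ := w
    obtain ⟨y, hy⟩ := w'
    intro h
    change reachOn src tgt _ x y at h
    induction h with
    | refl => exact Relation.ReflTransGen.refl
    | tail _ hyz ih =>
      obtain ⟨e, he, hyz⟩ := hyz
      obtain ⟨u, u', rfl, rfl, huu'⟩ :=
        exists_adjOn_colSub (Set.notMem_empty ⟨e, not_not.1 he⟩) hyz
      exact (ih u.2).tail huu'

/-- A colored component of color `ℓ` as a connected component of the union of all of them. -/
def colSubComp (K : Σ ℓ, ColSubComponent src tgt col ℓ) : ColoredComp src tgt col :=
  ⟨⟨K.1, Quotient.map Subtype.val (fun _ _ h => reachOn_colSub_iff.1 h) K.2⟩, by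
    obtain ⟨ℓ, K⟩ := K
    obtain ⟨⟨v, e, he, hv⟩, rfl⟩ := Quotient.exists_rep K
    subst he
    rcases hv with rfl | rfl
    exacts [⟨e, rfl, memCC_edgeComp_src e⟩, ⟨e, rfl, (memCC_edgeComp_tgt e).symm⟩]⟩

lemma colSubComp_bijective :
    Function.Bijective (colSubComp (src := src) (tgt := tgt) (col := col)) := by
  constructor
  · rintro ⟨ℓ, K⟩ ⟨ℓ', K'⟩ h
    obtain rfl : ℓ = ℓ' := congrArg (fun S => S.1.1) h
    obtain ⟨w, rfl⟩ := Quotient.exists_rep K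
    obtain ⟨w', rfl⟩ := Quotient.exists_rep K'
    have hww' := eq_of_heq (Sigma.mk.inj (congrArg Subtype.val h)).2
    exact congrArg (Sigma.mk ℓ) (Quotient.sound (reachOn_colSub_iff.2 (Quotient.exact hww')))
  · intro S
    obtain ⟨e, rfl⟩ := edgeComp_surjective S
    exact ⟨⟨col e, Quotient.mk _ ⟨src e, e, rfl, Or.inl rfl⟩⟩, rfl⟩

lemma card_coloredComp [Finite V] :
    Nat.card (ColoredComp src tgt col) =
      ∑ ℓ, ncomp (colSubSrc src tgt col ℓ) (colSubTgt src tgt col ℓ) := by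
  rw [← Nat.card_eq_of_bijective _ colSubComp_bijective, Nat.card_sigma]
  rfl

lemma gccGraph_connected [Nonempty V] (hconn : IsConnectedGraph src tgt) :
    (gccGraph src tgt col).Connected := by
  have hvert : ∀ x y, (gccGraph src tgt col).Reachable (Sum.inr x) (Sum.inr y) := fun x y =>
    (hconn x y).reachable fun e _ =>
      (gccGraph_adj_inl_inr.2 (memCC_edgeComp_src e)).reachable.symm.trans
        (gccGraph_adj_inl_inr.2 (memCC_edgeComp_tgt e)).reachable
  obtain ⟨v⟩ := ‹Nonempty V›
  refine (SimpleGraph.connected_iff_exists_forall_reachable _).2 ⟨Sum.inr v, ?_⟩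
  rintro (S | u)
  · obtain ⟨e, rfl⟩ := edgeComp_surjective S
    exact (hvert v (src e)).trans
      (gccGraph_adj_inl_inr.2 (memCC_edgeComp_src e)).reachable.symm
  · exact hvert v u

lemma nonBridgeGraph_gccGraph_adj {S : ColoredComp src tgt col} {v z : V}
    (hv : memCC src tgt col v S) (hz : memCC src tgt col z S) (hzv : z ≠ v)
    (h : reachOn src tgt {e | edgeComp src tgt col e = S} v z) :
    (nonBridgeGraph (gccGraph src tgt col)).Adj (Sum.inl S) (Sum.inr v) := by
  rw [nonBridgeGraph_adj, SimpleGraph.isBridge_iff, not_not]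
  refine ⟨gccGraph_adj_inl_inr.2 hv, ?_⟩
  have hadj : ∀ {S' x}, memCC src tgt col x S' → (S' ≠ S ∨ x ≠ v) →
      ((gccGraph src tgt col).deleteEdges {s(Sum.inl S, Sum.inr v)}).Adj
        (Sum.inl S') (Sum.inr x) := by
    intro S' x hx hne
    refine SimpleGraph.deleteEdges_adj.2 ⟨gccGraph_adj_inl_inr.2 hx, ?_⟩
    simpa [imp_iff_not_or] using hne
  refine (hadj hz (Or.inr hzv)).reachable.trans (h.symm.reachable fun e he => ?_)
  exact (hadj (memCC_edgeComp_src e) (Or.inl he)).reachable.symm.trans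
    (hadj (memCC_edgeComp_tgt e) (Or.inl he)).reachable

/-- The cut edge `e` of the colored component `S` at the leaf `c` is not a cut edge of `H`, so a
path avoiding `e` leads from `c` to the other end of `e`, which is in `S`. That path can leave `c`
only through edges outside `S`, and it has to come back to `S`. -/
lemma exists_detour_of_teccDeg_eq_one (h2ec : ∀ e, ¬ IsCutEdge src tgt e)
    {c : Quotient (teccSetoid (colSubSrc src tgt col ℓ) (colSubTgt src tgt col ℓ))}
    (hc : teccDeg _ _ c = 1) :
    ∃ (w : ColVert src tgt col ℓ) (z : V), teccOf _ _ w = c ∧ z ≠ w.1 ∧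
      memCC src tgt col z (colSubComp ⟨ℓ, teccComponent _ _ c⟩) ∧
      reachOn src tgt {e | edgeComp src tgt col e = colSubComp ⟨ℓ, teccComponent _ _ c⟩}
        w.1 z := by
  obtain ⟨e, a, b, hab, ha, hb, hclosed⟩ := exists_cutEdge_of_teccDeg_eq_one hc
  have havoid : reachOn src tgt {e.1} a.1 b.1 := by
    have := not_not.1 (h2ec e.1)
    rcases hab with ⟨rfl, rfl⟩ | ⟨rfl, rfl⟩
    exacts [this, this.symm]
  have hbS : memCC src tgt col b.1 (colSubComp ⟨ℓ, teccComponent _ _ c⟩) := by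
    subst ha
    rcases hab with ⟨rfl, rfl⟩ | ⟨rfl, rfl⟩
    · exact Quotient.sound (Relation.ReflTransGen.single ⟨e, not_not.2 e.2, Or.inr ⟨rfl, rfl⟩⟩)
    · exact Quotient.sound (Relation.ReflTransGen.single ⟨e, not_not.2 e.2, Or.inl ⟨rfl, rfl⟩⟩)
  set S := colSubComp ⟨ℓ, teccComponent _ _ c⟩
  by_contra! hreturn
  have hdetour : ∀ x, reachOn src tgt {e.1} a.1 x → ∃ w : ColVert src tgt col ℓ,
      teccOf _ _ w = c ∧ reachOn src tgt {e | edgeComp src tgt col e = S} w.1 x := by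
    intro x hx
    induction hx with
    | refl => exact ⟨a, ha, Relation.ReflTransGen.refl⟩
    | @tail x y _ hxy ih =>
      obtain ⟨w, hw, hwx⟩ := ih
      obtain ⟨g, hge, hxy⟩ := hxy
      by_cases hgS : edgeComp src tgt col g = S
      · have hgℓ : col g = ℓ := congrArg (fun S => S.1.1) hgS
        have hxS : memCC src tgt col x S := by
          rw [← hgS]
          rcases hxy with ⟨rfl, rfl⟩ | ⟨rfl, rfl⟩
          exacts [memCC_edgeComp_src g, memCC_edgeComp_tgt g]
        have hxw : x = w.1 := by_contra fun hne => hreturn w x hw hne hxS hwx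
        obtain ⟨u, u', hu, rfl, huu'⟩ := exists_adjOn_colSub (e := ⟨g, hgℓ⟩) (F := {e})
          (fun h => hge (congrArg Subtype.val h)) hxy
        obtain rfl : u = w := Subtype.ext (hu.trans hxw)
        exact ⟨u', hclosed _ _ huu' hw, Relation.ReflTransGen.refl⟩
      · exact ⟨w, hw, hwx.tail ⟨g, hgS, hxy⟩⟩
  obtain ⟨w, hw, hwb⟩ := hdetour b havoid
  have hbw : b ≠ w := fun h => hb (h ▸ hw)
  exact hreturn w b hw (fun h => hbw (Subtype.ext h)) hbS hwb

lemma numTeccOfDeg_one_le_degree [Fintype V] (h2ec : ∀ e, ¬ IsCutEdge src tgt e)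
    (K : Σ ℓ, ColSubComponent src tgt col ℓ) :
    numTeccOfDeg _ _ 1 K.2 ≤
      (nonBridgeGraph (gccGraph src tgt col)).degree (Sum.inl (colSubComp K)) := by
  obtain ⟨ℓ, K⟩ := K
  have hleaf : ∀ c : {c // teccDeg _ _ c = 1 ∧ teccComponent _ _ c = K},
      ∃ w : ColVert src tgt col ℓ, teccOf _ _ w = c.1 ∧
        (nonBridgeGraph (gccGraph src tgt col)).Adj (Sum.inl (colSubComp ⟨ℓ, K⟩))
          (Sum.inr w.1) := by
    rintro ⟨c, hc, rfl⟩
    obtain ⟨w, z, rfl, hzw, hz, hwz⟩ := exists_detour_of_teccDeg_eq_one h2ec hc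
    exact ⟨w, rfl, nonBridgeGraph_gccGraph_adj rfl hz hzw hwz⟩
  choose vert hvert hadj using hleaf
  rw [← SimpleGraph.card_neighborSet_eq_degree, ← Nat.card_eq_fintype_card]
  refine Nat.card_le_card_of_injective (fun c => ⟨Sum.inr (vert c).1, hadj c⟩) fun c c' h => ?_
  have hvv' : vert c = vert c' := Subtype.ext (Sum.inr_injective (congrArg Subtype.val h))
  exact Subtype.ext (by rw [← hvert c, hvv', hvert c'])

lemma sum_frak_le_sum_max_two_degree [Fintype V] (h2ec : ∀ e, ¬ IsCutEdge src tgt e) :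
    ∑ ℓ, frak (colSubSrc src tgt col ℓ) (colSubTgt src tgt col ℓ) ≤
      ∑ S : ColoredComp src tgt col,
        max 2 ((nonBridgeGraph (gccGraph src tgt col)).degree (Sum.inl S)) := by
  simp only [← sum_frakComponent]
  rw [← Fintype.sum_sigma', ← colSubComp_bijective.sum_comp]
  exact Finset.sum_le_sum fun K _ => (frakComponent_le_max K.2).trans
    (max_le_max le_rfl (numTeccOfDeg_one_le_degree h2ec K))

theorem two_mul_card_add_sum_frak_le [Finite V] [Nonempty V] (hconn : IsConnectedGraph src tgt)
    (h2ec : ∀ e, ¬ IsCutEdge src tgt e) (hnt : ¬ (gccGraph src tgt col).IsTree) :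
    2 * Nat.card V + ∑ ℓ, frak (colSubSrc src tgt col ℓ) (colSubTgt src tgt col ℓ) ≤
      2 * Nat.card (gccGraph src tgt col).edgeSet := by
  have := Fintype.ofFinite V
  have hG : (gccGraph src tgt col).Connected := gccGraph_connected hconn
  calc
    _ ≤ ∑ v : V, max 2 ((nonBridgeGraph (gccGraph src tgt col)).degree (Sum.inr v)) +
          ∑ S : ColoredComp src tgt col,
            max 2 ((nonBridgeGraph (gccGraph src tgt col)).degree (Sum.inl S)) := by
      refine add_le_add ?_ (sum_frak_le_sum_max_two_degree h2ec)
      rw [Nat.card_eq_fintype_card, mul_comm, ← smul_eq_mul]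
      exact Finset.card_nsmul_le_sum _ _ _ fun v _ => le_max_left _ _
    _ = ∑ x, max 2 ((nonBridgeGraph (gccGraph src tgt col)).degree x) := by
      rw [Fintype.sum_sum_type, add_comm]
    _ ≤ _ := sum_max_two_nonBridgeGraph_degree_le hG fun hac => hnt ⟨hG, hac⟩

end ColoredComponents

theorem gcc_not_tree_counting_estimate_general
    {V E : Type} [Finite V] [Nonempty V] (src tgt : E → V) {L : ℕ} (col : E → Fin L)
    (hconn : IsConnectedGraph src tgt)
    (h2ec : ∀ e : E, ¬ IsCutEdge src tgt e)
    (hnt : ¬ (gccGraph src tgt col).IsTree) :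
    (Nat.card (ColoredComp src tgt col ⊕ V) : ℝ) -
        (Nat.card (gccGraph src tgt col).edgeSet : ℝ) - 1 +
        (∑ ℓ : Fin L,
          (frak (colSubSrc src tgt col ℓ) (colSubTgt src tgt col ℓ) : ℝ)) / 2 -
        ∑ ℓ : Fin L,
          (ncomp (colSubSrc src tgt col ℓ) (colSubTgt src tgt col ℓ) : ℝ)
      ≤ -1 := by
  have hcount : 2 * (Nat.card V : ℝ) +
      ∑ ℓ, (frak (colSubSrc src tgt col ℓ) (colSubTgt src tgt col ℓ) : ℝ) ≤
      2 * Nat.card (gccGraph src tgt col).edgeSet := by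
    exact_mod_cast two_mul_card_add_sum_frak_le hconn h2ec hnt
  have hcomp : (Nat.card (ColoredComp src tgt col) : ℝ) =
      ∑ ℓ, (ncomp (colSubSrc src tgt col ℓ) (colSubTgt src tgt col ℓ) : ℝ) := by
    exact_mod_cast card_coloredComp
  rw [Nat.card_sum, Nat.cast_add]
  linarith

/-- key combinatorial estimate.
For a finite connected multigraph `H` with at least one edge, no cut edge,
and edges colored by `{1, …, L}`, if the graph of colored components
`GCC(H) = (𝓥, 𝓔)` is not a tree, then
`|𝓥| - |𝓔| - 1 + Σ_{S ∈ CC(H)} 𝔣(S)/2 - |CC(H)| ≤ -1`. -/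
theorem gcc_not_tree_counting_estimate
    {V E : Type} [Fintype V] [Fintype E] [Nonempty E]
    (src tgt : E → V) {L : ℕ} (hL : 1 ≤ L) (col : E → Fin L)
    (hconn : IsConnectedGraph src tgt)
    (h2ec : ∀ e : E, ¬ IsCutEdge src tgt e)
    (hnt : ¬ (gccGraph src tgt col).IsTree) :
    (Nat.card (ColoredComp src tgt col ⊕ V) : ℝ) -
        (Nat.card (gccGraph src tgt col).edgeSet : ℝ) - 1 +
        (∑ ℓ : Fin L,
          (frak (colSubSrc src tgt col ℓ) (colSubTgt src tgt col ℓ) : ℝ)) / 2 -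
        ∑ ℓ : Fin L,
          (ncomp (colSubSrc src tgt col ℓ) (colSubTgt src tgt col ℓ) : ℝ)
      ≤ -1 := by
  have : Nonempty V := ‹Nonempty E›.map src
  exact gcc_not_tree_counting_estimate_general src tgt col hconn h2ec hnt
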